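/- With the notation of the iterated integrals Ω at φ = π/4, one has Ω_{2,1,3,3} = (iπ³/4)·log 2 − iπ·ζ(3). -/

import Mathlib

noncomputable section

/-- `p₁ = e^{iπ/4}` -/
def p₁ : ℂ := Complex.exp (Complex.I * ((Real.pi : ℂ) / 4))
/-- `p₂ = -e^{-iπ/4}` -/
def p₂ : ℂ := -Complex.exp (-(Complex.I * ((Real.pi : ℂ) / 4)))
/-- `p₃ = -p₁` -/
def p₃ : ℂ := -p₁
/-- `p₄ = -p₂` -/
def p₄ : ℂ := -p₂

def F₁ (z : ℂ) : ℂ := 1 / (z - p₁) - 1 / (z - p₂) + 1 / (z - p₃) - 1 / (z - p₄)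

def F₂ (z : ℂ) : ℂ := 1 / (z - p₁) - 1 / (z - p₂) - 1 / (z - p₃) + 1 / (z - p₄)

def F₃ (z : ℂ) : ℂ := 1 / (z - p₁) + 1 / (z - p₂) - 1 / (z - p₃) - 1 / (z - p₄)

/-- Iterated integral along `[0, z]`:
`Omega [F_{i₁}, …, F_{iₙ}] z = Ω_{i₁,…,iₙ}(z)`, defined recursively by
`Ω_{i₁,…,i_k}(z) = ∫₀ᶻ Ω_{i₁,…,i_{k-1}}(t) · F_{i_k}(t) dt`, with `Ω_∅ ≡ 1`. -/
def Omega (fs : List (ℂ → ℂ)) : ℝ → ℂ :=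
  fs.foldl (fun g f => fun z => ∫ t in (0:ℝ)..z, g t * f (t : ℂ)) (fun _ => 1)

/-!
On the real line `F₂` is real and `F₁`, `F₃` are `i` times real functions, so `Ω_{2,1,3,3}` is `-i`
times a real iterated integral. Integrating by parts twice collapses its two outer `F₃`-layers into
the square of a primitive `phase` of `-F₃ / (2i)`, and the substitution `x = phase z` turns what is
left into `-8 ∫₀^{π/2} x² · s arsinh s / √(1 + s²) dx` with `s = cos x`. Expanding the integrand in
powers of `s`, with odd Wallis integrals as coefficients, and integrating term by term gives
`-π ∑ₙ (-1)ⁿ / (n + 1) · ∑_{k > n + 1} 1 / k²`. Abel summation rewrites this alternating Euler sum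
through the alternating Tornheim series `∑ (-1)^{j + k} / (j k (j + k))`, which the parity
decomposition of the index lattice evaluates as `ζ(3) / 4`.
-/

open Filter Topology MeasureTheory Finset
open Real (log cos sin arctan arsinh)
open scoped Real

/-! ### Enveloping alternating series -/

/-- The alternating series `∑ (-1)ⁿ u n` envelops `s`: the error of each partial sum is at most the
first omitted term. Unlike a convergent expansion with an explicit remainder, this property can be
integrated term by term without any uniformity in the parameter. -/
def AltEnvelopes (u : ℕ → ℝ) (s : ℝ) : Prop :=
  ∀ N, |s - ∑ n ∈ range N, (-1) ^ n * u n| ≤ u N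

namespace AltEnvelopes

lemma const_mul {u : ℕ → ℝ} {s c : ℝ} (h : AltEnvelopes u s) (hc : 0 ≤ c) :
    AltEnvelopes (fun n => c * u n) (c * s) := fun N => by
  have hsum : ∑ n ∈ range N, (-1) ^ n * (c * u n) = c * ∑ n ∈ range N, (-1) ^ n * u n := by
    rw [mul_sum]
    exact sum_congr rfl fun n _ => mul_left_comm _ _ _
  rw [hsum, ← mul_sub, abs_mul, abs_of_nonneg hc]
  exact mul_le_mul_of_nonneg_left (h N) hc

lemma integral {u : ℕ → ℝ → ℝ} {f : ℝ → ℝ} {a b : ℝ} (hab : a ≤ b)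
    (h : ∀ x ∈ Set.Ioc a b, AltEnvelopes (fun n => u n x) (f x))
    (hf : IntervalIntegrable f volume a b) (hu : ∀ n, IntervalIntegrable (u n) volume a b) :
    AltEnvelopes (fun n => ∫ x in a..b, u n x) (∫ x in a..b, f x) := fun N => by
  have hterm : ∀ n ∈ range N, IntervalIntegrable (fun x => (-1) ^ n * u n x) volume a b :=
    fun n _ => (hu n).const_mul _
  have hsum : ∑ n ∈ range N, (-1) ^ n * ∫ x in a..b, u n x
      = ∫ x in a..b, ∑ n ∈ range N, (-1) ^ n * u n x := by
    rw [intervalIntegral.integral_finsetSum hterm]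
    simp only [intervalIntegral.integral_const_mul]
  rw [hsum, ← intervalIntegral.integral_sub hf
    (by simpa only [sum_fn] using IntervalIntegrable.sum _ hterm)]
  exact intervalIntegral.norm_integral_le_of_norm_le (E := ℝ) hab
    (.of_forall fun x hx => h x hx N) (hu N)

lemma tendsto_sum {u : ℕ → ℝ} {s : ℝ} (h : AltEnvelopes u s) (hu : Tendsto u atTop (𝓝 0)) :
    Tendsto (fun N => ∑ n ∈ range N, (-1) ^ n * u n) atTop (𝓝 s) := by
  rw [tendsto_iff_dist_tendsto_zero]
  refine squeeze_zero (fun _ => dist_nonneg) (fun N => ?_) hu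
  rw [dist_comm]
  exact h N

end AltEnvelopes

lemma altEnvelopes_geometric {w : ℝ} (hw : 0 ≤ w) : AltEnvelopes (fun n => w ^ n) (1 / (1 + w)) :=
  fun N => by
  have hw1 : 0 < 1 + w := by positivity
  have hrem : 1 / (1 + w) - ∑ n ∈ range N, (-1) ^ n * w ^ n = (-w) ^ N / (1 + w) := by
    simp only [← neg_pow]
    rw [geom_sum_eq (by linarith), ← neg_div_neg_eq _ (-w - 1), neg_sub, neg_sub, sub_neg_eq_add]
    ring
  rw [hrem, abs_div, abs_pow, abs_neg, abs_of_nonneg hw, abs_of_pos hw1]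
  exact div_le_self (by positivity) (by linarith)

lemma altEnvelopes_log_two : AltEnvelopes (fun n => 1 / ((n : ℝ) + 1)) (log 2) := by
  have hlog : ∫ x in (0 : ℝ)..1, 1 / (1 + x) = log 2 := by
    rw [intervalIntegral.integral_comp_add_left (fun x : ℝ => 1 / x) 1,
      integral_one_div_of_pos (by norm_num) (by norm_num)]
    norm_num
  have hpow (n : ℕ) : ∫ x in (0 : ℝ)..1, x ^ n = 1 / ((n : ℝ) + 1) := by simp [integral_pow]
  have hcont : ContinuousOn (fun x : ℝ => 1 / (1 + x)) (Set.uIcc 0 1) := by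
    refine continuousOn_const.div (by fun_prop) fun x hx => ?_
    rw [Set.uIcc_of_le zero_le_one] at hx
    linarith [hx.1]
  simpa only [hlog, hpow] using AltEnvelopes.integral zero_le_one
    (fun x hx => altEnvelopes_geometric hx.1.le) hcont.intervalIntegrable
    (fun n => (continuous_pow n).intervalIntegrable 0 1)

/-- The alternating harmonic numbers `1 - 1/2 + ⋯ ± 1/N`. -/
def altHarmonic (N : ℕ) : ℝ := ∑ n ∈ range N, (-1) ^ n * (1 / ((n : ℝ) + 1))

lemma altHarmonic_succ (N : ℕ) :
    altHarmonic (N + 1) = altHarmonic N + (-1) ^ N * (1 / ((N : ℝ) + 1)) :=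
  sum_range_succ _ _

lemma tendsto_altHarmonic : Tendsto altHarmonic atTop (𝓝 (log 2)) :=
  altEnvelopes_log_two.tendsto_sum tendsto_one_div_add_atTop_nhds_zero_nat

/-! ### Rearranging series -/

section Rearrangement

lemma hasSum_sum_antidiagonal {α : Type*} [AddCommMonoid α] [TopologicalSpace α] [ContinuousAdd α]
    [RegularSpace α] {g : ℕ × ℕ → α} {s : α} (hg : HasSum g s) :
    HasSum (fun N => ∑ p ∈ antidiagonal N, g p) s := by
  have hsigma := HasAntidiagonal.sigmaAntidiagonalEquivProd.hasSum_iff.mpr hg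
  refine hsigma.sigma fun N => ?_
  rw [← sum_coe_sort]
  exact hasSum_fintype _

lemma hasSum_sub_shift {α : Type*} [AddCommGroup α] [TopologicalSpace α] [IsTopologicalAddGroup α]
    [T2Space α] {u : ℕ → α} (hu : Tendsto u atTop (𝓝 0)) (k : ℕ)
    (hs : Summable fun m => u m - u (m + k)) :
    HasSum (fun m => u m - u (m + k)) (∑ i ∈ range k, u i) := by
  rw [hs.hasSum_iff_tendsto_nat]
  have hpartial (n : ℕ) : ∑ i ∈ range n, (u i - u (i + k))
      = ∑ i ∈ range k, u i - ∑ i ∈ range k, u (n + i) := by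
    have hsplit : ∑ i ∈ range n, u i + ∑ i ∈ range k, u (n + i)
        = ∑ i ∈ range k, u i + ∑ i ∈ range n, u (i + k) := by
      simp only [add_comm _ k, ← sum_range_add]
    rw [sum_sub_distrib, sub_eq_sub_iff_add_eq_add, hsplit]
  have htail : Tendsto (fun n => ∑ i ∈ range k, u (n + i)) atTop (𝓝 (∑ _ ∈ range k, 0)) :=
    tendsto_finsetSum _ fun i _ => hu.comp (tendsto_add_atTop_nat i)
  simpa [hpartial] using tendsto_const_nhds.sub htail

lemma tsum_prod_eq_tsum_parity {α : Type*} [AddCommGroup α] [UniformSpace α] [IsUniformAddGroup α]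
    [CompleteSpace α] [T2Space α] {g : ℕ × ℕ → α} (hg : Summable g) :
    ∑' x, g x = (∑' x : ℕ × ℕ, g (2 * x.1, 2 * x.2)) + (∑' x : ℕ × ℕ, g (2 * x.1, 2 * x.2 + 1)) +
      ((∑' x : ℕ × ℕ, g (2 * x.1 + 1, 2 * x.2)) +
        ∑' x : ℕ × ℕ, g (2 * x.1 + 1, 2 * x.2 + 1)) := by
  have heven : Function.Injective fun n : ℕ => 2 * n := fun a b h => by simpa using h
  have hodd : Function.Injective fun n : ℕ => 2 * n + 1 := fun a b h => by simpa using h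
  have hsplit (φ : ℕ → ℕ) (hφ : φ.Injective) : ∑' m, ∑' n, g (φ m, n)
      = (∑' x : ℕ × ℕ, g (φ x.1, 2 * x.2)) + ∑' x : ℕ × ℕ, g (φ x.1, 2 * x.2 + 1) := by
    have hsE : Summable fun x : ℕ × ℕ => g (φ x.1, 2 * x.2) :=
      hg.comp_injective (hφ.prodMap heven)
    have hsO : Summable fun x : ℕ × ℕ => g (φ x.1, 2 * x.2 + 1) :=
      hg.comp_injective (hφ.prodMap hodd)
    rw [hsE.tsum_prod, hsO.tsum_prod, ← hsE.prod.tsum_add hsO.prod]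
    refine tsum_congr fun m => (tsum_even_add_odd (f := fun n => g (φ m, n)) ?_ ?_).symm
    exacts [(hg.prod_factor (φ m)).comp_injective heven, (hg.prod_factor (φ m)).comp_injective hodd]
  rw [hg.tsum_prod, ← tsum_even_add_odd (f := fun m => ∑' n, g (m, n))
    (hg.prod.comp_injective heven) (hg.prod.comp_injective hodd), hsplit _ heven, hsplit _ hodd]

lemma hasSum_alternating_one_div_pow {k : ℕ} {s : ℝ}
    (h : HasSum (fun n : ℕ => 1 / ((n : ℝ) + 1) ^ k) s) :
    HasSum (fun n : ℕ => (-1) ^ n * (1 / ((n : ℝ) + 1) ^ k)) ((1 - 2 / 2 ^ k) * s) := by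
  obtain ⟨e, heven⟩ : Summable fun n : ℕ => 1 / (((2 * n : ℕ) : ℝ) + 1) ^ k :=
    h.summable.comp_injective (i := fun n : ℕ => 2 * n) fun a b h => by simpa using h
  have hodd : HasSum (fun n : ℕ => 1 / (((2 * n + 1 : ℕ) : ℝ) + 1) ^ k) (s / 2 ^ k) := by
    refine (h.div_const (2 ^ k)).congr_fun fun n => ?_
    rw [div_div, ← mul_pow]
    push_cast
    ring
  have hs := h.unique (HasSum.even_add_odd heven hodd)
  have halt := HasSum.even_add_odd (f := fun n : ℕ => (-1) ^ n * (1 / ((n : ℝ) + 1) ^ k))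
    (by simpa using heven) (by simpa [pow_succ] using hodd.neg)
  convert halt using 1
  linear_combination hs

lemma sum_mul_sub_sum_succ {R : Type*} [CommRing R] (a b : ℕ → R) (c : R) (N : ℕ) :
    ∑ n ∈ range N, a n * (c - ∑ k ∈ range (n + 1), b k)
      = (∑ n ∈ range N, a n) * (c - ∑ k ∈ range N, b k)
        + ∑ n ∈ range N, (∑ k ∈ range n, a k) * b n := by
  induction N with
  | zero => simp
  | succ N ih =>
    simp only [sum_range_succ] at ih ⊢
    rw [ih]
    ring

end Rearrangement

/-! ### Tornheim sums -/

/-- The summand `1 / (x y (x + y))` of Tornheim's double series. -/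
def tornheim (x y : ℝ) : ℝ := 1 / (x * y * (x + y))

/-- Tornheim's double series over the shifted lattice `(b + ℕ) × (c + ℕ)`. -/
def tornheimSum (b c : ℝ) : ℝ := ∑' x : ℕ × ℕ, tornheim (x.1 + b) (x.2 + c)

/-- `ζ(3)` as a real number. -/
def zetaThree : ℝ := ∑' n : ℕ, 1 / ((n : ℝ) + 1) ^ 3

/-- The partial sums `∑_{k < N} 1 / (k + b)` of the harmonic series shifted by `b`. -/
def shiftedHarmonic (b : ℝ) (N : ℕ) : ℝ := ∑ k ∈ range N, 1 / ((k : ℝ) + b)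

section Tornheim

variable {x y b c : ℝ}

lemma tornheim_comm (x y : ℝ) : tornheim x y = tornheim y x := by
  rw [tornheim, tornheim, mul_comm x, add_comm x]

lemma tornheim_nonneg (hx : 0 ≤ x) (hy : 0 ≤ y) : 0 ≤ tornheim x y := by
  unfold tornheim
  positivity

lemma tornheim_mul_mul (r x y : ℝ) : tornheim (r * x) (r * y) = tornheim x y / r ^ 3 := by
  rw [tornheim, tornheim, div_div]
  ring

lemma tornheim_eq_add_div_sq (hx : 0 < x) (hy : 0 < y) :
    tornheim x y = (1 / x + 1 / y) / (x + y) ^ 2 := by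
  unfold tornheim
  field_simp
  ring

lemma tornheim_eq_sub_div_sq (hx : 0 < x) (hy : 0 < y) :
    tornheim x y = (1 / y - 1 / (y + x)) / x ^ 2 := by
  unfold tornheim
  field_simp
  ring

-- AM-GM decouples the two variables: `x + y ≥ √x √y`.
lemma tornheim_le_rpow_mul_rpow (hx : 0 < x) (hy : 0 < y) :
    tornheim x y ≤ 1 / x ^ (3 / 2 : ℝ) * (1 / y ^ (3 / 2 : ℝ)) := by
  have hpow (t : ℝ) (ht : 0 < t) : t ^ (3 / 2 : ℝ) = t * √t := by
    rw [show (3 / 2 : ℝ) = 1 + 1 / 2 by norm_num, Real.rpow_add ht, Real.rpow_one,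
      Real.sqrt_eq_rpow]
  have hsqrt : √x * √y ≤ x + y := by
    nlinarith [sq_nonneg (√x - √y), Real.sq_sqrt hx.le, Real.sq_sqrt hy.le]
  rw [tornheim, one_div_mul_one_div, hpow x hx, hpow y hy, mul_mul_mul_comm]
  gcongr

lemma summable_tornheim (hb : 0 < b) (hc : 0 < c) :
    Summable fun x : ℕ × ℕ => tornheim (x.1 + b) (x.2 + c) := by
  have hrpow {d : ℝ} (hd : 0 < d) : Summable fun n : ℕ => 1 / ((n : ℝ) + d) ^ (3 / 2 : ℝ) := by
    refine ((Real.summable_one_div_nat_add_rpow d (3 / 2)).mpr (by norm_num)).congr fun n => ?_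
    rw [abs_of_pos (by positivity)]
  exact .of_nonneg_of_le (fun x => tornheim_nonneg (by positivity) (by positivity))
    (fun x => tornheim_le_rpow_mul_rpow (by positivity) (by positivity))
    ((hrpow hb).mul_of_nonneg (hrpow hc) (fun _ => by positivity) fun _ => by positivity)

lemma tornheimSum_comm (b c : ℝ) : tornheimSum b c = tornheimSum c b := by
  rw [tornheimSum, ← (Equiv.prodComm ℕ ℕ).tsum_eq]
  exact tsum_congr fun x => tornheim_comm _ _

lemma hasSum_tornheimSum_diagonal (hb : 0 < b) :
    HasSum (fun N : ℕ => 2 * shiftedHarmonic b (N + 1) / (N + 2 * b) ^ 2) (tornheimSum b b) := by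
  refine (hasSum_sum_antidiagonal (summable_tornheim hb hb).hasSum).congr_fun fun N => ?_
  have hterm : ∀ p ∈ antidiagonal N, tornheim (p.1 + b) (p.2 + b)
      = (1 / ((p.1 : ℝ) + b) + 1 / ((p.2 : ℝ) + b)) / (N + 2 * b) ^ 2 := fun p hp => by
    rw [tornheim_eq_add_div_sq (by positivity) (by positivity), ← mem_antidiagonal.mp hp]
    push_cast
    ring
  have hfst : ∑ p ∈ antidiagonal N, 1 / ((p.1 : ℝ) + b) = shiftedHarmonic b (N + 1) :=
    Finset.Nat.sum_antidiagonal_eq_sum_range_succ (fun i _ => 1 / ((i : ℝ) + b)) N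
  have hsnd : ∑ p ∈ antidiagonal N, 1 / ((p.2 : ℝ) + b) = shiftedHarmonic b (N + 1) := by
    rw [← hfst, ← Finset.Nat.sum_antidiagonal_swap]
    rfl
  rw [sum_congr rfl hterm, ← sum_div, sum_add_distrib, hfst, hsnd, two_mul]

lemma hasSum_tornheimSum_one (hb : 0 < b) :
    HasSum (fun N : ℕ => shiftedHarmonic b (N + 1) / ((N : ℝ) + 1) ^ 2) (tornheimSum 1 b) := by
  have hsum := summable_tornheim one_pos hb
  refine hsum.hasSum.prod_fiberwise fun N => ?_
  have hterm (m : ℕ) : tornheim (N + 1) (m + b)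
      = (1 / ((m : ℝ) + b) - 1 / (((m + (N + 1) : ℕ) : ℝ) + b)) / ((N : ℝ) + 1) ^ 2 := by
    rw [tornheim_eq_sub_div_sq (by positivity) (by positivity)]
    push_cast
    ring
  have hlim : Tendsto (fun m : ℕ => 1 / ((m : ℝ) + b)) atTop (𝓝 0) := by
    simp only [one_div]
    exact (tendsto_atTop_add_const_right _ b tendsto_natCast_atTop_atTop).inv_tendsto_atTop
  have hfiber := hsum.prod_factor N
  simp only [hterm] at hfiber ⊢
  rw [summable_div_const_iff (by positivity)] at hfiber
  exact (hasSum_sub_shift hlim (N + 1) hfiber).div_const _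

end Tornheim

lemma hasSum_zetaThree : HasSum (fun n : ℕ => 1 / ((n : ℝ) + 1) ^ 3) zetaThree := by
  have h := (summable_nat_add_iff 1).mpr (Real.summable_one_div_nat_pow.mpr (by norm_num : 1 < 3))
  exact Summable.hasSum (by simpa using h)

lemma ofReal_zetaThree : (zetaThree : ℂ) = riemannZeta 3 := by
  have h := zeta_eq_tsum_one_div_nat_add_one_cpow (s := 3) (by norm_num)
  rw [h, zetaThree]
  push_cast
  exact tsum_congr fun n => by norm_cast

lemma tornheimSum_one_one : tornheimSum 1 1 = 2 * zetaThree := by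
  have hstrict : HasSum (fun N : ℕ => shiftedHarmonic 1 N / ((N : ℝ) + 1) ^ 2)
      (tornheimSum 1 1 - zetaThree) := by
    refine ((hasSum_tornheimSum_one one_pos).sub hasSum_zetaThree).congr_fun fun N => ?_
    rw [shiftedHarmonic, shiftedHarmonic, sum_range_succ]
    field_simp
    ring
  have hhalf : HasSum (fun N : ℕ => shiftedHarmonic 1 N / ((N : ℝ) + 1) ^ 2)
      (tornheimSum 1 1 / 2) := by
    rw [← hasSum_nat_add_iff' 1]
    have h := (hasSum_tornheimSum_diagonal one_pos).div_const 2
    simp only [range_one, sum_singleton, shiftedHarmonic, range_zero, sum_empty, zero_div,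
      sub_zero] at h ⊢
    refine h.congr_fun fun N => ?_
    push_cast
    ring
  linarith [hstrict.unique hhalf]

lemma tornheimSum_half_half : tornheimSum (1 / 2) (1 / 2) = 2 * tornheimSum 1 (1 / 2) := by
  refine (hasSum_tornheimSum_diagonal one_half_pos).unique
    (((hasSum_tornheimSum_one one_half_pos).mul_left 2).congr_fun fun N => ?_)
  ring

lemma summable_alternating_tornheim :
    Summable fun x : ℕ × ℕ => (-1 : ℝ) ^ (x.1 + x.2) * tornheim (x.1 + 1) (x.2 + 1) := by
  refine (summable_tornheim one_pos one_pos).of_norm_bounded fun x => ?_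
  rw [norm_mul, norm_pow, norm_neg, norm_one, one_pow, one_mul, Real.norm_of_nonneg]
  exact tornheim_nonneg (by positivity) (by positivity)

-- Only the class where both arguments of `tornheim` are even survives: the other three cancel by
-- `tornheimSum_half_half`.
lemma tsum_alternating_tornheim :
    ∑' x : ℕ × ℕ, (-1 : ℝ) ^ (x.1 + x.2) * tornheim (x.1 + 1) (x.2 + 1) = zetaThree / 4 := by
  have hclass {k l : ℕ} {b c r : ℝ} (hb : (k : ℝ) + 1 = 2 * b) (hc : (l : ℝ) + 1 = 2 * c)
      (hr : (-1) ^ (k + l) = r) : ∑' x : ℕ × ℕ, (-1 : ℝ) ^ ((2 * x.1 + k) + (2 * x.2 + l)) *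
        tornheim ((2 * x.1 + k : ℕ) + 1) ((2 * x.2 + l : ℕ) + 1) = r / 8 * tornheimSum b c := by
    rw [tornheimSum, ← tsum_mul_left]
    refine tsum_congr fun x => ?_
    have hsign : (-1 : ℝ) ^ ((2 * x.1 + k) + (2 * x.2 + l)) = r := by
      rw [← hr, show 2 * x.1 + k + (2 * x.2 + l) = 2 * (x.1 + x.2) + (k + l) by ring, pow_add,
        pow_mul, neg_one_sq, one_pow, one_mul]
    have hfst : ((2 * x.1 + k : ℕ) : ℝ) + 1 = 2 * (x.1 + b) := by push_cast; linarith
    have hsnd : ((2 * x.2 + l : ℕ) : ℝ) + 1 = 2 * (x.2 + c) := by push_cast; linarith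
    rw [hsign, hfst, hsnd, tornheim_mul_mul]
    ring
  have h00 := hclass (k := 0) (l := 0) (b := 1 / 2) (c := 1 / 2) (r := 1)
    (by norm_num) (by norm_num) (by norm_num)
  have h01 := hclass (k := 0) (l := 1) (b := 1 / 2) (c := 1) (r := -1)
    (by norm_num) (by norm_num) (by norm_num)
  have h10 := hclass (k := 1) (l := 0) (b := 1) (c := 1 / 2) (r := -1)
    (by norm_num) (by norm_num) (by norm_num)
  have h11 := hclass (k := 1) (l := 1) (b := 1) (c := 1) (r := 1)
    (by norm_num) (by norm_num) (by norm_num)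
  simp only [add_zero] at h00 h01 h10
  rw [tsum_prod_eq_tsum_parity summable_alternating_tornheim]
  dsimp only
  rw [h00, h01, h10, h11, tornheimSum_comm (1 / 2) 1, tornheimSum_half_half, tornheimSum_one_one]
  ring

/-! ### An alternating Euler sum -/

/-- The partial sums of `ζ(2)`. -/
def zetaTwoPartial (N : ℕ) : ℝ := ∑ n ∈ range N, 1 / ((n : ℝ) + 1) ^ 2

lemma zetaTwoPartial_succ (N : ℕ) :
    zetaTwoPartial (N + 1) = zetaTwoPartial N + 1 / ((N : ℝ) + 1) ^ 2 :=
  sum_range_succ _ _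

lemma hasSum_one_div_succ_sq : HasSum (fun n : ℕ => 1 / ((n : ℝ) + 1) ^ 2) (π ^ 2 / 6) := by
  simpa using (hasSum_nat_add_iff' 1).mpr hasSum_zeta_two

lemma tendsto_zetaTwo_tail :
    Tendsto (fun N => π ^ 2 / 6 - zetaTwoPartial N) atTop (𝓝 0) := by
  rw [← sub_self (π ^ 2 / 6)]
  exact hasSum_one_div_succ_sq.tendsto_sum_nat.const_sub _

lemma sum_alternating_tornheim_row (j N : ℕ) :
    ∑ i ∈ range N, (-1 : ℝ) ^ (j + i) * tornheim (j + 1) (i + 1)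
      = ((-1) ^ j * altHarmonic N + (altHarmonic (N + (j + 1)) - altHarmonic (j + 1)))
        / ((j : ℝ) + 1) ^ 2 := by
  induction N with
  | zero => simp [altHarmonic]
  | succ N ih =>
    rw [sum_range_succ, ih, altHarmonic_succ N, show N + 1 + (j + 1) = N + (j + 1) + 1 by ring,
      altHarmonic_succ (N + (j + 1)), tornheim_eq_sub_div_sq (by positivity) (by positivity)]
    push_cast
    ring

lemma hasSum_alternating_tornheim_row (j : ℕ) :
    HasSum (fun i : ℕ => (-1 : ℝ) ^ (j + i) * tornheim (j + 1) (i + 1))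
      (((-1) ^ j * log 2 + (log 2 - altHarmonic (j + 1))) / ((j : ℝ) + 1) ^ 2) := by
  rw [(summable_alternating_tornheim.prod_factor j).hasSum_iff_tendsto_nat]
  simp only [sum_alternating_tornheim_row]
  have hshift := tendsto_altHarmonic.comp (tendsto_add_atTop_nat (j + 1))
  exact ((tendsto_altHarmonic.const_mul _).add (hshift.sub_const _)).div_const _

lemma hasSum_altHarmonic_div_sq :
    HasSum (fun j : ℕ => altHarmonic j * (1 / ((j : ℝ) + 1) ^ 2))
      (π ^ 2 / 4 * log 2 - zetaThree) := by
  have hrows := summable_alternating_tornheim.hasSum.prod_fiberwise hasSum_alternating_tornheim_row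
  rw [tsum_alternating_tornheim] at hrows
  have hsq := hasSum_one_div_succ_sq
  have hcomb := (((hsq.add (hasSum_alternating_one_div_pow hsq)).mul_left (log 2)).sub hrows).sub
    (hasSum_alternating_one_div_pow hasSum_zetaThree)
  rw [show π ^ 2 / 4 * log 2 - zetaThree = log 2 * (π ^ 2 / 6 + (1 - 2 / 2 ^ 2) * (π ^ 2 / 6)) -
    zetaThree / 4 - (1 - 2 / 2 ^ 3) * zetaThree by ring]
  refine hcomb.congr_fun fun j => ?_
  rw [altHarmonic_succ j]
  field_simp
  ring

lemma tendsto_sum_alternating_zetaTwo_tail :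
    Tendsto (fun N => ∑ n ∈ range N,
        (-1 : ℝ) ^ n * (1 / ((n : ℝ) + 1) * (π ^ 2 / 6 - zetaTwoPartial (n + 1))))
      atTop (𝓝 (π ^ 2 / 4 * log 2 - zetaThree)) := by
  have hparts (N : ℕ) : ∑ n ∈ range N,
      (-1 : ℝ) ^ n * (1 / ((n : ℝ) + 1) * (π ^ 2 / 6 - zetaTwoPartial (n + 1)))
        = altHarmonic N * (π ^ 2 / 6 - zetaTwoPartial N)
          + ∑ j ∈ range N, altHarmonic j * (1 / ((j : ℝ) + 1) ^ 2) := by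
    simp only [← mul_assoc]
    exact sum_mul_sub_sum_succ _ _ _ N
  simp only [hparts]
  simpa only [mul_zero, zero_add] using
    (tendsto_altHarmonic.mul tendsto_zetaTwo_tail).add hasSum_altHarmonic_div_sq.tendsto_sum_nat

/-! ### Wallis moments -/

/-- The Wallis integral `∫₀^{π/2} cosⁿ`. -/
def wallis (n : ℕ) : ℝ := ∫ x in (0 : ℝ)..(π / 2), cos x ^ n

/-- The Wallis integral weighted by `x²`. -/
def wallisSq (n : ℕ) : ℝ := ∫ x in (0 : ℝ)..(π / 2), x ^ 2 * cos x ^ n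

lemma wallis_add_two (n : ℕ) : wallis (n + 2) = (n + 1) / (n + 2) * wallis n := by
  simp [wallis, integral_cos_pow]

lemma wallis_mul_wallis_succ (n : ℕ) : wallis n * wallis (n + 1) = π / (2 * (n + 1)) := by
  induction n with
  | zero => simp [wallis]
  | succ n ih =>
    rw [show n + 1 + 1 = n + 2 from rfl, wallis_add_two, mul_left_comm, mul_comm (wallis (n + 1)),
      ih]
    push_cast
    field_simp
    ring

-- Integrate the derivative of `(n + 2) x² cosⁿ⁺¹ x sin x + 2 x cosⁿ⁺² x`.
lemma wallisSq_add_two (n : ℕ) :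
    ((n : ℝ) + 2) ^ 2 * wallisSq (n + 2)
      = (n + 2) * (n + 1) * wallisSq n - 2 * wallis (n + 2) := by
  have hderiv (x : ℝ) : HasDerivAt
      (fun x => ((n : ℝ) + 2) * (x ^ 2 * (cos x ^ (n + 1) * sin x)) + 2 * (x * cos x ^ (n + 2)))
      (((n : ℝ) + 2) ^ 2 * (x ^ 2 * cos x ^ (n + 2)) - (n + 2) * (n + 1) * (x ^ 2 * cos x ^ n)
        + 2 * cos x ^ (n + 2)) x := by
    have hcos := Real.hasDerivAt_cos x
    refine ((((hasDerivAt_pow 2 x).mul ((hcos.fun_pow (n + 1)).mul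
      (Real.hasDerivAt_sin x))).const_mul ((n : ℝ) + 2)).add
      (((hasDerivAt_id x).mul (hcos.fun_pow (n + 2))).const_mul 2)).congr_deriv ?_
    simp only [Pi.mul_apply, id, Nat.add_sub_cancel, show n + 2 - 1 = n + 1 from rfl]
    push_cast
    linear_combination -(n + 2 : ℝ) * (n + 1) * x ^ 2 * cos x ^ n * Real.sin_sq_add_cos_sq x
  have hint {g : ℝ → ℝ} (hg : Continuous g) : IntervalIntegrable g volume 0 (π / 2) :=
    hg.intervalIntegrable _ _
  have hftc := intervalIntegral.integral_eq_sub_of_hasDerivAt (a := 0) (b := π / 2)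
    (fun x _ => hderiv x) (hint (by fun_prop))
  rw [intervalIntegral.integral_add (hint (by fun_prop)) (hint (by fun_prop)),
    intervalIntegral.integral_sub (hint (by fun_prop)) (hint (by fun_prop))] at hftc
  simp only [intervalIntegral.integral_const_mul, Real.cos_pi_div_two, ne_eq, Nat.add_eq_zero_iff,
    OfNat.ofNat_ne_zero, one_ne_zero, and_false, not_false_eq_true, zero_pow, zero_mul, mul_zero,
    add_zero, sub_zero] at hftc
  unfold wallis wallisSq
  linarith

lemma wallisSq_two_mul (n : ℕ) :
    wallisSq (2 * n) = wallis (2 * n) * (π ^ 2 / 12 - zetaTwoPartial n / 2) := by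
  induction n with
  | zero =>
    have hwallis : wallis 0 = π / 2 := by simp [wallis]
    have hwallisSq : wallisSq 0 = (π / 2) ^ 3 / 3 := by norm_num [wallisSq, integral_pow]
    rw [mul_zero, hwallisSq, hwallis, zetaTwoPartial, sum_range_zero]
    ring
  | succ n ih =>
    have hrec := wallisSq_add_two (2 * n)
    rw [ih] at hrec
    rw [show 2 * (n + 1) = 2 * n + 2 by ring, zetaTwoPartial_succ]
    rw [wallis_add_two] at hrec ⊢
    push_cast at hrec ⊢
    refine mul_left_cancel₀ (show (2 * (n : ℝ) + 2) ^ 2 ≠ 0 by positivity) ?_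
    rw [hrec]
    field_simp
    ring

lemma wallis_mul_wallisSq (n : ℕ) : wallis (2 * n + 1) * wallisSq (2 * (n + 1))
    = π / 8 * (1 / ((n : ℝ) + 1) * (π ^ 2 / 6 - zetaTwoPartial (n + 1))) := by
  rw [wallisSq_two_mul, ← mul_assoc, show 2 * (n + 1) = 2 * n + 1 + 1 by ring,
    wallis_mul_wallis_succ]
  push_cast
  field_simp
  ring

/-- The function `s ↦ s arsinh s / √(1 + s²)`, whose Taylor coefficients are, up to sign, the odd
Wallis integrals. -/
def arsinhKernel (s : ℝ) : ℝ := s * arsinh s / √(1 + s ^ 2)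

lemma continuous_arsinhKernel : Continuous arsinhKernel := by
  unfold arsinhKernel
  have := Real.continuous_arsinh
  fun_prop (disch := intros; positivity)

lemma hasDerivAt_log_div_sqrt_one_add_sq (s θ : ℝ) :
    HasDerivAt (fun θ => s / (2 * √(1 + s ^ 2)) *
        (log (√(1 + s ^ 2) + s * sin θ) - log (√(1 + s ^ 2) - s * sin θ)))
      (s ^ 2 * cos θ * (1 / (1 + s ^ 2 * cos θ ^ 2))) θ := by
  set c := √(1 + s ^ 2)
  have hc : c ^ 2 = 1 + s ^ 2 := Real.sq_sqrt (by positivity)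
  have hc0 : 0 < c := Real.sqrt_pos.mpr (by positivity)
  have hlt : |s * sin θ| < c := by
    refine Real.lt_sqrt_of_sq_lt ?_
    rw [sq_abs, mul_pow]
    nlinarith [Real.sin_sq_add_cos_sq θ, mul_nonneg (sq_nonneg s) (sq_nonneg (cos θ))]
  have hadd : 0 < c + s * sin θ := by linarith [(abs_lt.mp hlt).1]
  have hsub : 0 < c - s * sin θ := by linarith [(abs_lt.mp hlt).2]
  have hsin := (Real.hasDerivAt_sin θ).const_mul s
  refine ((((hsin.const_add c).log hadd.ne').sub
    ((hsin.const_sub c).log hsub.ne')).const_mul (s / (2 * c))).congr_deriv ?_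
  have hfactor : 1 + s ^ 2 * cos θ ^ 2 = (c + s * sin θ) * (c - s * sin θ) := by
    linear_combination -hc + s ^ 2 * Real.sin_sq_add_cos_sq θ
  rw [hfactor]
  field_simp
  ring

lemma arsinhKernel_eq_integral (s : ℝ) :
    arsinhKernel s = ∫ θ in (0 : ℝ)..(π / 2), s ^ 2 * cos θ * (1 / (1 + s ^ 2 * cos θ ^ 2)) := by
  have hcont : Continuous fun θ => s ^ 2 * cos θ * (1 / (1 + s ^ 2 * cos θ ^ 2)) := by
    fun_prop (disch := intros; positivity)
  rw [intervalIntegral.integral_eq_sub_of_hasDerivAt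
    (fun θ _ => hasDerivAt_log_div_sqrt_one_add_sq s θ) (hcont.intervalIntegrable _ _)]
  have hneg : log (√(1 + s ^ 2) - s) = -arsinh s := by
    rw [← Real.arsinh_neg, arsinh, neg_sq, neg_add_eq_sub]
  have hpos : log (√(1 + s ^ 2) + s) = arsinh s := by rw [arsinh, add_comm]
  rw [Real.sin_pi_div_two, Real.sin_zero, mul_one, mul_zero, add_zero, sub_zero, hneg, hpos,
    arsinhKernel]
  ring

lemma altEnvelopes_arsinhKernel (s : ℝ) :
    AltEnvelopes (fun n => wallis (2 * n + 1) * s ^ (2 * n + 2)) (arsinhKernel s) := by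
  have hterm (n : ℕ) : ∫ θ in (0 : ℝ)..(π / 2), s ^ 2 * cos θ * (s ^ 2 * cos θ ^ 2) ^ n
      = wallis (2 * n + 1) * s ^ (2 * n + 2) := by
    rw [wallis, ← intervalIntegral.integral_mul_const]
    congr 1 with θ
    ring
  rw [arsinhKernel_eq_integral]
  simp only [← hterm]
  refine AltEnvelopes.integral (by positivity) (fun θ hθ => ?_)
    (Continuous.intervalIntegrable (by fun_prop (disch := intros; positivity)) _ _)
    fun n => Continuous.intervalIntegrable (by fun_prop) _ _
  have hcos : 0 ≤ cos θ := Real.cos_nonneg_of_mem_Icc ⟨by linarith [hθ.1, Real.pi_pos], hθ.2⟩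
  exact (altEnvelopes_geometric (by positivity)).const_mul (by positivity)

lemma altEnvelopes_integral_arsinhKernel_cos :
    AltEnvelopes (fun n => π / 8 * (1 / ((n : ℝ) + 1) * (π ^ 2 / 6 - zetaTwoPartial (n + 1))))
      (∫ x in (0 : ℝ)..(π / 2), x ^ 2 * arsinhKernel (cos x)) := by
  have hterm (n : ℕ) :
      ∫ x in (0 : ℝ)..(π / 2), x ^ 2 * (wallis (2 * n + 1) * cos x ^ (2 * n + 2))
        = π / 8 * (1 / ((n : ℝ) + 1) * (π ^ 2 / 6 - zetaTwoPartial (n + 1))) := by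
    rw [← wallis_mul_wallisSq, wallisSq, ← intervalIntegral.integral_const_mul]
    congr 1 with x
    ring
  have hcont := continuous_arsinhKernel
  simp only [← hterm]
  exact AltEnvelopes.integral (by positivity)
    (fun x _ => (altEnvelopes_arsinhKernel (cos x)).const_mul (sq_nonneg x))
    (Continuous.intervalIntegrable (by fun_prop) _ _)
    fun n => Continuous.intervalIntegrable (by fun_prop) _ _

lemma integral_sq_mul_arsinhKernel_cos :
    ∫ x in (0 : ℝ)..(π / 2), x ^ 2 * arsinhKernel (cos x)
      = π / 8 * (π ^ 2 / 4 * log 2 - zetaThree) := by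
  have hzero : Tendsto (fun n : ℕ =>
      π / 8 * (1 / ((n : ℝ) + 1) * (π ^ 2 / 6 - zetaTwoPartial (n + 1)))) atTop (𝓝 0) := by
    have htail := tendsto_zetaTwo_tail.comp (tendsto_add_atTop_nat 1)
    simpa only [mul_zero, Function.comp_def] using
      (tendsto_one_div_add_atTop_nhds_zero_nat.mul htail).const_mul (π / 8)
  refine tendsto_nhds_unique (altEnvelopes_integral_arsinhKernel_cos.tendsto_sum hzero) ?_
  refine (tendsto_sum_alternating_zetaTwo_tail.const_mul (π / 8)).congr fun N => ?_
  rw [mul_sum]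
  exact sum_congr rfl fun n _ => mul_left_comm _ _ _

/-! ### Reduction to a single real integral -/

/-- The real density `4t / (1 + t⁴)` of `F₁ = i · realF₁`. -/
def realF₁ (t : ℝ) : ℝ := 4 * t / (1 + t ^ 4)

/-- The real density `2√2 (t² - 1) / (1 + t⁴)` of `F₂ = realF₂`. -/
def realF₂ (t : ℝ) : ℝ := 2 * √2 * (t ^ 2 - 1) / (1 + t ^ 4)

/-- The real density `2√2 (t² + 1) / (1 + t⁴)` of `F₃ = i · realF₃`. -/
def realF₃ (t : ℝ) : ℝ := 2 * √2 * (t ^ 2 + 1) / (1 + t ^ 4)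

lemma continuous_realF₁ : Continuous realF₁ := by
  unfold realF₁
  fun_prop (disch := intros; positivity)

lemma continuous_realF₂ : Continuous realF₂ := by
  unfold realF₂
  fun_prop (disch := intros; positivity)

lemma continuous_realF₃ : Continuous realF₃ := by
  unfold realF₃
  fun_prop (disch := intros; positivity)

section Poles

variable {K : Type*} [Field K]

lemma one_div_sub_add_one_div_sub_neg {z q r : K} (hq : q ^ 2 = r) (h : z ^ 2 - r ≠ 0) :
    1 / (z - q) + 1 / (z - -q) = 2 * z / (z ^ 2 - r) := by
  subst hq
  rw [sq_sub_sq, mul_ne_zero_iff] at h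
  rw [sub_neg_eq_add, sq_sub_sq, div_add_div _ _ h.2 h.1, mul_comm (z + q)]
  ring

lemma one_div_sub_sub_one_div_sub_neg {z q r : K} (hq : q ^ 2 = r) (h : z ^ 2 - r ≠ 0) :
    1 / (z - q) - 1 / (z - -q) = 2 * q / (z ^ 2 - r) := by
  subst hq
  rw [sq_sub_sq, mul_ne_zero_iff] at h
  rw [sub_neg_eq_add, sq_sub_sq, div_sub_div _ _ h.2 h.1, mul_comm (z + q)]
  ring

lemma p₁_eq : p₁ = (√2 / 2 : ℝ) + (√2 / 2 : ℝ) * Complex.I := by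
  rw [p₁, show Complex.I * ((π : ℂ) / 4) = ((π / 4 : ℝ) : ℂ) * Complex.I by push_cast; ring,
    Complex.exp_mul_I, ← Complex.ofReal_cos, ← Complex.ofReal_sin, Real.cos_pi_div_four,
    Real.sin_pi_div_four]

lemma p₂_eq : p₂ = -(√2 / 2 : ℝ) + (√2 / 2 : ℝ) * Complex.I := by
  rw [p₂, show -(Complex.I * ((π : ℂ) / 4)) = ((-(π / 4) : ℝ) : ℂ) * Complex.I by push_cast; ring,
    Complex.exp_mul_I, ← Complex.ofReal_cos, ← Complex.ofReal_sin, Real.cos_neg, Real.sin_neg,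
    Real.cos_pi_div_four, Real.sin_pi_div_four]
  push_cast
  ring

lemma p₁_sub_p₂ : p₁ - p₂ = (√2 : ℝ) := by
  rw [p₁_eq, p₂_eq]
  push_cast
  ring

lemma p₁_add_p₂ : p₁ + p₂ = (√2 : ℝ) * Complex.I := by
  rw [p₁_eq, p₂_eq]
  push_cast
  ring

lemma p₁_sq : p₁ ^ 2 = Complex.I := by
  calc p₁ ^ 2 = Complex.exp (π / 2 * Complex.I) := by
        rw [p₁, ← Complex.exp_nat_mul]
        push_cast
        ring_nf
    _ = Complex.I := Complex.exp_pi_div_two_mul_I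

lemma p₂_sq : p₂ ^ 2 = -Complex.I := by
  calc p₂ ^ 2 = Complex.exp (-π / 2 * Complex.I) := by
        rw [p₂, neg_sq, ← Complex.exp_nat_mul]
        push_cast
        ring_nf
    _ = -Complex.I := Complex.exp_neg_pi_div_two_mul_I

lemma sq_sub_I_mul_sq_add_I (z : ℂ) :
    (z ^ 2 - Complex.I) * (z ^ 2 - -Complex.I) = 1 + z ^ 4 := by
  linear_combination -Complex.I_sq

variable (t : ℝ)

lemma sq_sub_I_ne_zero_and_sq_add_I_ne_zero :
    (t : ℂ) ^ 2 - Complex.I ≠ 0 ∧ (t : ℂ) ^ 2 - -Complex.I ≠ 0 := by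
  rw [← mul_ne_zero_iff, sq_sub_I_mul_sq_add_I]
  exact_mod_cast (by positivity : 1 + t ^ 4 ≠ 0)

lemma F₁_ofReal : F₁ t = Complex.I * realF₁ t := by
  obtain ⟨hsub, hadd⟩ := sq_sub_I_ne_zero_and_sq_add_I_ne_zero t
  have hF : F₁ t = 2 * t / (t ^ 2 - Complex.I) - 2 * t / (t ^ 2 - -Complex.I) := by
    rw [F₁, p₃, p₄, ← one_div_sub_add_one_div_sub_neg p₁_sq hsub,
      ← one_div_sub_add_one_div_sub_neg p₂_sq hadd]
    ring
  rw [hF, div_sub_div _ _ hsub hadd, sq_sub_I_mul_sq_add_I, realF₁]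
  push_cast
  ring

lemma F₂_ofReal : F₂ t = realF₂ t := by
  obtain ⟨hsub, hadd⟩ := sq_sub_I_ne_zero_and_sq_add_I_ne_zero t
  have hF : F₂ t = 2 * p₁ / (t ^ 2 - Complex.I) - 2 * p₂ / (t ^ 2 - -Complex.I) := by
    rw [F₂, p₃, p₄, ← one_div_sub_sub_one_div_sub_neg p₁_sq hsub,
      ← one_div_sub_sub_one_div_sub_neg p₂_sq hadd]
    ring
  rw [hF, div_sub_div _ _ hsub hadd, sq_sub_I_mul_sq_add_I, realF₂]
  push_cast
  congr 1
  linear_combination 2 * (t : ℂ) ^ 2 * p₁_sub_p₂ + 2 * Complex.I * p₁_add_p₂ +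
    2 * ((√2 : ℝ) : ℂ) * Complex.I_sq

lemma F₃_ofReal : F₃ t = Complex.I * realF₃ t := by
  obtain ⟨hsub, hadd⟩ := sq_sub_I_ne_zero_and_sq_add_I_ne_zero t
  have hF : F₃ t = 2 * p₁ / (t ^ 2 - Complex.I) + 2 * p₂ / (t ^ 2 - -Complex.I) := by
    rw [F₃, p₃, p₄, ← one_div_sub_sub_one_div_sub_neg p₁_sq hsub,
      ← one_div_sub_sub_one_div_sub_neg p₂_sq hadd]
    ring
  rw [hF, div_add_div _ _ hsub hadd, sq_sub_I_mul_sq_add_I, realF₃]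
  push_cast
  rw [← mul_div_assoc]
  congr 1
  linear_combination 2 * Complex.I * p₁_sub_p₂ + 2 * (t : ℂ) ^ 2 * p₁_add_p₂

end Poles

/-- The real counterpart of `Omega`: the iterated integral of real densities along `[0, z]`, the
first density in the list being innermost. -/
def iteratedIntegral (fs : List (ℝ → ℝ)) : ℝ → ℝ :=
  fs.foldl (fun g f z => ∫ t in (0 : ℝ)..z, g t * f t) fun _ => 1

lemma Omega_eq_prod_mul_iteratedIntegral {Fs : List (ℂ → ℂ)} {cfs : List (ℂ × (ℝ → ℝ))}
    (h : List.Forall₂ (fun (F : ℂ → ℂ) (cf : ℂ × (ℝ → ℝ)) => ∀ t : ℝ, F t = cf.1 * cf.2 t) Fs cfs)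
    (z : ℝ) :
    Omega Fs z = (cfs.map Prod.fst).prod * iteratedIntegral (cfs.map Prod.snd) z := by
  suffices hstart : ∀ (c : ℂ) (g : ℝ → ℝ),
      Fs.foldl (fun g f z => ∫ t in (0 : ℝ)..z, g t * f (t : ℂ)) (fun t => c * g t) z
        = c * (cfs.map Prod.fst).prod *
          ((cfs.map Prod.snd).foldl (fun g f z => ∫ t in (0 : ℝ)..z, g t * f t) g z : ℝ) by
    simpa [Omega, iteratedIntegral] using hstart 1 fun _ => 1
  induction h with
  | nil => simp
  | @cons F cf Fs cfs hF _ ih =>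
    intro c g
    have hstep : (fun z : ℝ => ∫ t in (0 : ℝ)..z, c * g t * F t)
        = fun z => c * cf.1 * (∫ t in (0 : ℝ)..z, g t * cf.2 t : ℝ) := by
      ext z
      rw [← intervalIntegral.integral_ofReal, ← intervalIntegral.integral_const_mul]
      congr 1 with t
      rw [hF]
      push_cast
      ring
    rw [List.foldl_cons, hstep, ih]
    simp only [List.map_cons, List.prod_cons, List.foldl_cons, mul_assoc]

lemma Omega_eq_neg_I_mul_iteratedIntegral :
    Omega [F₂, F₁, F₃, F₃] 1
      = -Complex.I * iteratedIntegral [realF₂, realF₁, realF₃, realF₃] 1 := by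
  have h := Omega_eq_prod_mul_iteratedIntegral (Fs := [F₂, F₁, F₃, F₃])
    (cfs := [(1, realF₂), (Complex.I, realF₁), (Complex.I, realF₃), (Complex.I, realF₃)])
    (.cons (by simpa using F₂_ofReal) <| .cons F₁_ofReal <| .cons F₃_ofReal <|
      .cons F₃_ofReal .nil) 1
  simpa using h

-- Integration by parts twice; `Φ` vanishing at `b` removes the boundary terms.
lemma integral_integral_mul_eq_half_integral_mul_sq {g f Φ : ℝ → ℝ} {a b : ℝ} (hg : Continuous g)
    (hf : Continuous f) (hΦ : ∀ x, HasDerivAt Φ (-f x) x) (hb : Φ b = 0) :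
    ∫ t in a..b, (∫ s in a..t, (∫ r in a..s, g r) * f s) * f t
      = 1 / 2 * ∫ r in a..b, g r * Φ r ^ 2 := by
  have hderiv {u : ℝ → ℝ} (hu : Continuous u) (x : ℝ) :
      HasDerivAt (fun t => ∫ s in a..t, u s) (u x) x :=
    (hu.integral_hasStrictDerivAt a x).hasDerivAt
  have hcont {u u' : ℝ → ℝ} (hu : ∀ x, HasDerivAt u (u' x) x) : Continuous u :=
    continuous_iff_continuousAt.mpr fun x => (hu x).continuousAt
  set A : ℝ → ℝ := fun s => ∫ r in a..s, g r
  have hA' : ∀ x, HasDerivAt A (g x) x := hderiv hg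
  have hAf : Continuous fun s => A s * f s := (hcont hA').mul hf
  set B : ℝ → ℝ := fun t => ∫ s in a..t, A s * f s
  have hB' : ∀ x, HasDerivAt B (A x * f x) x := hderiv hAf
  have hBc := hcont hB'
  have hΦc := hcont hΦ
  have hparts (x : ℝ) : HasDerivAt (fun x => B x * Φ x + 1 / 2 * (A x * Φ x ^ 2))
      (1 / 2 * (g x * Φ x ^ 2) - B x * f x) x := by
    refine (((hB' x).mul (hΦ x)).add
      (((hA' x).mul ((hΦ x).fun_pow 2)).const_mul (1 / 2))).congr_deriv ?_
    push_cast
    ring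
  have hftc := intervalIntegral.integral_eq_sub_of_hasDerivAt (a := a) (b := b)
    (fun x _ => hparts x) (Continuous.intervalIntegrable (by fun_prop) _ _)
  rw [intervalIntegral.integral_sub (Continuous.intervalIntegrable (by fun_prop) _ _)
    (Continuous.intervalIntegrable (by fun_prop) _ _), intervalIntegral.integral_const_mul,
    show A a = 0 from intervalIntegral.integral_same,
    show B a = 0 from intervalIntegral.integral_same, hb] at hftc
  linarith

/-- The factor of `1 + z⁴ = quadFactor z * quadFactor (-z)`. -/
def quadFactor (z : ℝ) : ℝ := z ^ 2 + √2 * z + 1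

/-- The primitive of `realF₂` vanishing at `0`. -/
def logRatio (z : ℝ) : ℝ := log (quadFactor (-z)) - log (quadFactor z)

/-- The primitive of `-realF₃ / 2` vanishing at `1`. It runs from `π / 2` to `0` over `[0, 1]` and
turns `√2 z / √(1 + z⁴)` into a cosine. -/
def phase (z : ℝ) : ℝ := π / 2 - (arctan (√2 * z + 1) + arctan (√2 * z - 1))

section Primitives

variable (z : ℝ)

lemma sq_sqrt_two : √2 ^ 2 = (2 : ℝ) := Real.sq_sqrt zero_le_two

lemma one_add_sq_sqrt_two_mul_add_one : 1 + (√2 * z + 1) ^ 2 = 2 * quadFactor z := by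
  unfold quadFactor
  linear_combination z ^ 2 * sq_sqrt_two

lemma one_add_sq_sqrt_two_mul_sub_one : 1 + (√2 * z - 1) ^ 2 = 2 * quadFactor (-z) := by
  unfold quadFactor
  linear_combination z ^ 2 * sq_sqrt_two

lemma quadFactor_pos : 0 < quadFactor z := by
  have := one_add_sq_sqrt_two_mul_add_one z
  nlinarith [sq_nonneg (√2 * z + 1)]

lemma quadFactor_mul_quadFactor_neg : quadFactor z * quadFactor (-z) = 1 + z ^ 4 := by
  unfold quadFactor
  linear_combination -z ^ 2 * sq_sqrt_two

lemma hasDerivAt_quadFactor : HasDerivAt quadFactor (2 * z + √2) z := by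
  refine (((hasDerivAt_pow 2 z).add ((hasDerivAt_id z).const_mul √2)).add_const 1).congr_deriv ?_
  simp

lemma hasDerivAt_logRatio : HasDerivAt logRatio (realF₂ z) z := by
  have hneg := (hasDerivAt_quadFactor (-z)).comp z (hasDerivAt_neg z)
  have hpos := quadFactor_pos z
  have hpos' := quadFactor_pos (-z)
  refine ((hneg.log hpos'.ne').sub ((hasDerivAt_quadFactor z).log hpos.ne')).congr_deriv ?_
  rw [realF₂, ← quadFactor_mul_quadFactor_neg, Function.comp_apply,
    div_sub_div _ _ hpos'.ne' hpos.ne', mul_comm (quadFactor z)]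
  unfold quadFactor
  ring

lemma integral_realF₂ : ∫ t in (0 : ℝ)..z, realF₂ t = logRatio z := by
  rw [intervalIntegral.integral_eq_sub_of_hasDerivAt (fun t _ => hasDerivAt_logRatio t)
    (continuous_realF₂.intervalIntegrable _ _)]
  simp [logRatio]

lemma hasDerivAt_phase : HasDerivAt phase (-realF₃ z / 2) z := by
  have hmul : HasDerivAt (fun x : ℝ => √2 * x) √2 z := by
    simpa using (hasDerivAt_id z).const_mul √2
  refine (((hmul.add_const 1).arctan.add (hmul.sub_const 1).arctan).const_sub
    (π / 2)).congr_deriv ?_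
  have hpos := quadFactor_pos z
  have hpos' := quadFactor_pos (-z)
  have hsum : z ^ 2 + 1 = (quadFactor z + quadFactor (-z)) / 2 := by
    unfold quadFactor
    ring
  rw [one_add_sq_sqrt_two_mul_add_one, one_add_sq_sqrt_two_mul_sub_one, realF₃,
    ← quadFactor_mul_quadFactor_neg, hsum]
  field_simp
  ring

lemma phase_zero : phase 0 = π / 2 := by
  simp [phase, Real.arctan_neg]

lemma phase_one : phase 1 = 0 := by
  have hinv : √2 * 1 - 1 = (√2 * 1 + 1)⁻¹ :=
    eq_inv_of_mul_eq_one_left (by linear_combination sq_sqrt_two)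
  rw [phase, hinv, Real.arctan_inv_of_pos (by positivity)]
  ring

lemma cos_phase : cos (phase z) = √2 * z / √(1 + z ^ 4) := by
  have hsqrt : √(1 + (√2 * z + 1) ^ 2) * √(1 + (√2 * z - 1) ^ 2) = 2 * √(1 + z ^ 4) := by
    rw [← Real.sqrt_mul (by positivity), one_add_sq_sqrt_two_mul_add_one,
      one_add_sq_sqrt_two_mul_sub_one, mul_mul_mul_comm, quadFactor_mul_quadFactor_neg,
      Real.sqrt_mul (by positivity), Real.sqrt_mul_self zero_le_two]
  rw [phase, Real.cos_pi_div_two_sub, Real.sin_add, Real.sin_arctan, Real.sin_arctan,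
    Real.cos_arctan, Real.cos_arctan, div_mul_div_comm, div_mul_div_comm, hsqrt, ← add_div]
  field_simp
  ring

lemma sqrt_one_add_cos_phase_sq : √(1 + cos (phase z) ^ 2) = (1 + z ^ 2) / √(1 + z ^ 4) := by
  have hsq : √(1 + z ^ 4) ^ 2 = 1 + z ^ 4 := Real.sq_sqrt (by positivity)
  rw [cos_phase, Real.sqrt_eq_iff_mul_self_eq (by positivity) (by positivity)]
  field_simp
  rw [hsq]
  linear_combination z ^ 2 * sq_sqrt_two

lemma arsinh_cos_phase : arsinh (cos (phase z)) = -logRatio z / 2 := by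
  have hpos := quadFactor_pos z
  have hpos' := quadFactor_pos (-z)
  have hsum : cos (phase z) + √(1 + cos (phase z) ^ 2) = quadFactor z / √(1 + z ^ 4) := by
    rw [sqrt_one_add_cos_phase_sq, cos_phase, quadFactor]
    ring
  rw [arsinh, hsum, ← quadFactor_mul_quadFactor_neg, Real.log_div hpos.ne' (by positivity),
    Real.log_sqrt (by positivity), Real.log_mul hpos.ne' hpos'.ne', logRatio]
  ring

lemma arsinhKernel_cos_phase :
    arsinhKernel (cos (phase z)) = -(√2 * z / (1 + z ^ 2)) * logRatio z / 2 := by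
  rw [arsinhKernel, sqrt_one_add_cos_phase_sq, arsinh_cos_phase, cos_phase]
  field_simp

lemma continuous_logRatio : Continuous logRatio :=
  continuous_iff_continuousAt.mpr fun z => (hasDerivAt_logRatio z).continuousAt

end Primitives

lemma iteratedIntegral_eq_two_mul_integral :
    iteratedIntegral [realF₂, realF₁, realF₃, realF₃] 1
      = 2 * ∫ z in (0 : ℝ)..1, logRatio z * realF₁ z * phase z ^ 2 := by
  have hnested : iteratedIntegral [realF₂, realF₁, realF₃, realF₃] 1
      = ∫ t in (0 : ℝ)..1, (∫ s in (0 : ℝ)..t, (∫ r in (0 : ℝ)..s, logRatio r * realF₁ r)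
        * realF₃ s) * realF₃ t := by
    simp only [iteratedIntegral, List.foldl_cons, List.foldl_nil, one_mul, integral_realF₂]
  have hderiv (x : ℝ) : HasDerivAt (fun x => 2 * phase x) (-realF₃ x) x :=
    ((hasDerivAt_phase x).const_mul 2).congr_deriv (by ring)
  rw [hnested, integral_integral_mul_eq_half_integral_mul_sq (Φ := fun x => 2 * phase x)
    (continuous_logRatio.fun_mul continuous_realF₁) continuous_realF₃ hderiv (by simp [phase_one]),
    ← intervalIntegral.integral_const_mul, ← intervalIntegral.integral_const_mul]
  congr 1 with z
  ring

lemma integral_logRatio_mul_realF₁_mul_phase_sq :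
    ∫ z in (0 : ℝ)..1, logRatio z * realF₁ z * phase z ^ 2
      = -4 * ∫ x in (0 : ℝ)..(π / 2), x ^ 2 * arsinhKernel (cos x) := by
  have hsubst := intervalIntegral.integral_comp_mul_deriv (a := 0) (b := 1)
    (g := fun x => x ^ 2 * arsinhKernel (cos x)) (fun z _ => hasDerivAt_phase z)
    (by have := continuous_realF₃; fun_prop) (by have := continuous_arsinhKernel; fun_prop)
  rw [phase_zero, phase_one, intervalIntegral.integral_symm 0 (π / 2)] at hsubst
  rw [neg_mul, ← mul_neg, ← hsubst, ← intervalIntegral.integral_const_mul]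
  congr 1 with z
  rw [Function.comp_apply, arsinhKernel_cos_phase, realF₁, realF₃]
  field_simp
  linear_combination -(logRatio z * z * phase z ^ 2 * (1 + z ^ 2)) * sq_sqrt_two

/- STATEMENT 14: `Ω_{2,1,3,3} = (iπ³/4) log 2 - iπ ζ(3)`. -/
theorem stmt_14 :
    Omega [F₂, F₁, F₃, F₃] 1 =
      Complex.I * (Real.pi : ℂ) ^ 3 / 4 * ((Real.log 2 : ℝ) : ℂ) -
        Complex.I * (Real.pi : ℂ) * riemannZeta 3 := by
  rw [Omega_eq_neg_I_mul_iteratedIntegral, iteratedIntegral_eq_two_mul_integral,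
    integral_logRatio_mul_realF₁_mul_phase_sq, integral_sq_mul_arsinhKernel_cos,
    ← ofReal_zetaThree]
  push_cast
  ring
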